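/- arXiv:0806.0709 — 4 statements merged into one kernel-verified Lean document; each statement's English description precedes it below -/
import Mathlib

section
/- Let X and D be smooth vector fields on ℝⁿ admitting global flows φ and ψ respectively, and let ζ ∈ ℝ. Then X is homogeneous of degree ζ with respect to D, i.e. [D,X](x) = ζ·X(x) for all x ∈ ℝⁿ, if and only if for all s, t ∈ ℝ and all x ∈ ℝⁿ: φ(t, ψ(s, x)) = ψ(s, φ(e^{ζs}·t, x)). -/
open Set Filter Topology Metric

lemma aux_lip {E : Type*} [NormedAddCommGroup E] [NormedSpace ℝ E] [ProperSpace E]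
    {D : E → E} (hD : ContDiff ℝ 1 D) (R : ℝ) :
    ∃ K : ℝ, 0 ≤ K ∧ ∀ p ∈ closedBall (0 : E) R, ∀ q ∈ closedBall (0 : E) R,
      ‖D q - D p‖ ≤ K * ‖q - p‖ := by
  have hc : Continuous (fderiv ℝ D) := hD.continuous_fderiv (by norm_num)
  obtain ⟨K, hK⟩ := (isCompact_closedBall (0 : E) R).exists_bound_of_continuousOn hc.continuousOn
  refine ⟨max K 0, le_max_right _ _, fun p hp q hq => ?_⟩
  exact (convex_closedBall (0 : E) R).norm_image_sub_le_of_norm_fderiv_le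
    (fun x _ => (hD.differentiable (by norm_num)) x)
    (fun x hx => (hK x hx).trans (le_max_left _ _)) hp hq

lemma aux_bdd {E : Type*} [NormedAddCommGroup E] [NormedSpace ℝ E]
    {p p' : ℝ → E} {a b : ℝ} (hp : ∀ s ∈ Icc a b, HasDerivAt p (p' s) s) :
    ∃ R : ℝ, 0 ≤ R ∧ ∀ s ∈ Icc a b, ‖p s‖ ≤ R := by
  obtain ⟨K, hK⟩ := (isCompact_Icc (a := a) (b := b)).exists_bound_of_continuousOn
    (f := p) (fun s hs => (hp s hs).continuousAt.continuousWithinAt)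
  exact ⟨max K 0, le_max_right _ _, fun s hs => (hK s hs).trans (le_max_left _ _)⟩

lemma aux_uniq {E : Type*} [NormedAddCommGroup E] [NormedSpace ℝ E] [ProperSpace E]
    {D : E → E} (hD : ContDiff ℝ 1 D) {p q : ℝ → E} {a b t₀ : ℝ} (ht : t₀ ∈ Ioo a b)
    (hp : ∀ s ∈ Icc a b, HasDerivAt p (D (p s)) s)
    (hq : ∀ s ∈ Icc a b, HasDerivAt q (D (q s)) s) (h0 : p t₀ = q t₀) :
    EqOn p q (Ioo a b) := by
  obtain ⟨R₁, _, h1⟩ := aux_bdd hp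
  obtain ⟨R₂, _, h2⟩ := aux_bdd hq
  obtain ⟨K, hK0, hK⟩ := aux_lip hD (max R₁ R₂)
  refine ODE_solution_unique_of_mem_Ioo (v := fun _ => D) (K := ⟨K, hK0⟩)
    (s := fun _ => closedBall (0 : E) (max R₁ R₂)) ?_ ht ?_ ?_ h0
  · intro t _
    refine LipschitzOnWith.of_dist_le_mul fun x hx y hy => ?_
    rw [dist_eq_norm, dist_eq_norm]
    exact hK y hy x hx
  · intro t ht
    refine ⟨hp t (Ioo_subset_Icc_self ht), ?_⟩
    simpa using Or.inl (h1 t (Ioo_subset_Icc_self ht))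
  · intro t ht
    refine ⟨hq t (Ioo_subset_Icc_self ht), ?_⟩
    simpa using Or.inr (h2 t (Ioo_subset_Icc_self ht))

lemma aux_remainder {E : Type*} [NormedAddCommGroup E] [NormedSpace ℝ E] [ProperSpace E]
    {D : E → E} (hD : ContDiff ℝ 1 D) (R η : ℝ) (hη : 0 < η) :
    ∃ δ > 0, ∀ p ∈ closedBall (0 : E) R, ∀ h : E, ‖h‖ < δ →
      ‖D (p + h) - D p - fderiv ℝ D p h‖ ≤ η * ‖h‖ := by
  have hc : Continuous (fderiv ℝ D) := hD.continuous_fderiv (by norm_num)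
  have hu := (isCompact_closedBall (0 : E) (R + 1)).uniformContinuousOn_of_continuous
    hc.continuousOn
  obtain ⟨δ, hδ, H⟩ := Metric.uniformContinuousOn_iff.1 hu η hη
  refine ⟨min δ 1, by positivity, fun p hp h hh => ?_⟩
  have hhδ := lt_of_lt_of_le hh (min_le_left _ _)
  have hh1 := lt_of_lt_of_le hh (min_le_right _ _)
  have hpn : ‖p‖ ≤ R := by simpa using hp
  have key := (convex_closedBall p ‖h‖).norm_image_sub_le_of_norm_fderiv_le' (𝕜 := ℝ) (f := D)
    (φ := fderiv ℝ D p) (C := η) (x := p) (y := p + h)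
    (fun x _ => (hD.differentiable (by norm_num)) x)
    (fun x hx => by
      have hx' : dist x p ≤ ‖h‖ := by simpa using hx
      have hxn : ‖x‖ ≤ R + 1 := by
        have : ‖x‖ ≤ ‖p‖ + ‖x - p‖ := by
          simpa using norm_add_le p (x - p)
        rw [dist_eq_norm] at hx'
        linarith
      rw [← dist_eq_norm]
      exact (H x (by simpa using hxn) p (by simpa using hpn.trans (by linarith))
        (by linarith)).le)
    (by simp) (by simp)
  simpa using key

/-- Differentiability of solutions with respect to a parameter, forward time. -/
lemma aux_key {E : Type*} [NormedAddCommGroup E] [NormedSpace ℝ E] [ProperSpace E]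
    {D : E → E} (hD : ContDiff ℝ 1 D) (z : ℝ → ℝ → E) (u : ℝ → E) (τ₀ S : ℝ) (hS : 0 ≤ S)
    (hz : ∀ τ, ∀ s ∈ Icc 0 S, HasDerivAt (z τ) (D (z τ s)) s)
    (hu : ∀ s ∈ Icc 0 S, HasDerivAt u (fderiv ℝ D (z τ₀ s) (u s)) s)
    (h0 : HasDerivAt (fun τ => z τ 0) (u 0) τ₀) :
    HasDerivAt (fun τ => z τ S) (u S) τ₀ := by
  obtain ⟨R₁, hR₁, h1⟩ := aux_bdd (hz τ₀)
  obtain ⟨R₂, hR₂, h2⟩ := aux_bdd hu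
  obtain ⟨K, hK0, hK⟩ := aux_lip hD (R₁ + R₂ + 1)
  rw [hasDerivAt_iff_isLittleO, Asymptotics.isLittleO_iff]
  rw [hasDerivAt_iff_isLittleO, Asymptotics.isLittleO_iff] at h0
  intro c hc
  set c₀ : ℝ := c * Real.exp (-((K + 1) * S)) with hc₀
  have hc₀pos : 0 < c₀ := by positivity
  obtain ⟨δ, hδ, hrem⟩ := aux_remainder hD R₁ (c₀ / (R₂ + 1)) (by positivity)
  have e1 : ∀ᶠ τ in 𝓝 τ₀, |τ - τ₀| < min 1 (min (δ / (R₂ + 1)) (1 / c)) := by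
    have := Metric.ball_mem_nhds τ₀ (ε := min 1 (min (δ / (R₂ + 1)) (1 / c))) (by positivity)
    filter_upwards [this] with τ hτ
    simpa [Real.dist_eq] using hτ
  filter_upwards [h0 hc₀pos, e1] with τ hτ0 hτ
  rw [lt_min_iff, lt_min_iff] at hτ
  obtain ⟨hτ1, hτδ, hτc⟩ := hτ
  rw [lt_div_iff₀ (by positivity)] at hτδ hτc
  rcases eq_or_ne τ τ₀ with rfl | hne
  · simp
  set k := τ - τ₀ with hk
  have hkpos : 0 < |k| := abs_pos.2 (sub_ne_zero.2 hne)
  rw [Real.norm_eq_abs] at hτ0 ⊢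
  have main := image_norm_le_of_norm_deriv_right_lt_deriv_boundary (a := 0) (b := S)
    (f := fun s => z τ s - z τ₀ s - k • u s)
    (f' := fun s => D (z τ s) - D (z τ₀ s) - k • fderiv ℝ D (z τ₀ s) (u s))
    (B := fun s => c₀ * |k| * Real.exp ((K + 1) * s))
    (B' := fun s => c₀ * |k| * (Real.exp ((K + 1) * s) * (K + 1)))
    (fun s hs => (((hz τ s hs).sub (hz τ₀ s hs)).sub
      ((hu s hs).const_smul k)).continuousAt.continuousWithinAt)
    (fun s hs => (((hz τ s (Ico_subset_Icc_self hs)).sub (hz τ₀ s (Ico_subset_Icc_self hs))).sub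
      ((hu s (Ico_subset_Icc_self hs)).const_smul k)).hasDerivWithinAt)
    (by simpa using hτ0)
    (fun s => by
      have : HasDerivAt (fun s : ℝ => (K + 1) * s) (K + 1) s := by
        simpa using (hasDerivAt_id s).const_mul (K + 1)
      exact (this.exp).const_mul _)
    (by
      intro s hs' heq
      have hs := Ico_subset_Icc_self hs'
      set e := z τ s - z τ₀ s - k • u s with he
      have hB1 : c₀ * |k| ≤ ‖e‖ := by
        rw [heq]
        refine le_mul_of_one_le_right (by positivity) (Real.one_le_exp ?_)
        have := hs.1
        positivity
      have hB2 : ‖e‖ ≤ 1 := by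
        rw [heq]
        calc c₀ * |k| * Real.exp ((K + 1) * s) ≤ c₀ * |k| * Real.exp ((K + 1) * S) := by
              gcongr
              exact hs.2
          _ = c * |k| * (Real.exp (-((K + 1) * S)) * Real.exp ((K + 1) * S)) := by
              rw [hc₀]; ring
          _ = |k| * c := by rw [← Real.exp_add]; simp [mul_comm]
          _ ≤ 1 := hτc.le
      have hku : ‖k • u s‖ ≤ |k| * R₂ := by
        rw [norm_smul, Real.norm_eq_abs]
        exact mul_le_mul_of_nonneg_left (h2 s hs) hkpos.le
      have hkuR : ‖k • u s‖ ≤ R₂ := hku.trans (by nlinarith)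
      have hkuδ : ‖k • u s‖ < δ := by nlinarith
      have hp : z τ₀ s ∈ closedBall (0 : E) R₁ := by simpa using h1 s hs
      have hr := hrem _ hp _ hkuδ
      have hz' : z τ s = z τ₀ s + k • u s + e := by rw [he]; abel
      have hw : ‖z τ₀ s + k • u s‖ ≤ R₁ + R₂ :=
        (norm_add_le _ _).trans (add_le_add (h1 s hs) hkuR)
      have hL := hK (z τ₀ s + k • u s) (by simpa using hw.trans (by linarith))
        (z τ s) (by
          rw [hz']
          simpa using (norm_add_le _ _).trans (add_le_add hw hB2))
      have hL' : ‖D (z τ s) - D (z τ₀ s + k • u s)‖ ≤ K * ‖e‖ := by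
        convert hL using 3
        rw [hz']; abel
      have hr' : c₀ / (R₂ + 1) * ‖k • u s‖ < c₀ * |k| := by
        calc c₀ / (R₂ + 1) * ‖k • u s‖ ≤ c₀ / (R₂ + 1) * (|k| * R₂) := by gcongr
          _ < c₀ / (R₂ + 1) * (|k| * (R₂ + 1)) := by gcongr; linarith
          _ = c₀ * |k| := by field_simp
      have hdec : D (z τ s) - D (z τ₀ s) - k • fderiv ℝ D (z τ₀ s) (u s)
          = (D (z τ s) - D (z τ₀ s + k • u s)) +
            (D (z τ₀ s + k • u s) - D (z τ₀ s) - fderiv ℝ D (z τ₀ s) (k • u s)) := by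
        rw [map_smul]; abel
      calc ‖D (z τ s) - D (z τ₀ s) - k • fderiv ℝ D (z τ₀ s) (u s)‖
          ≤ K * ‖e‖ + c₀ / (R₂ + 1) * ‖k • u s‖ := by
            rw [hdec]; exact (norm_add_le _ _).trans (add_le_add hL' hr)
        _ < K * ‖e‖ + ‖e‖ := by linarith
        _ = c₀ * |k| * (Real.exp ((K + 1) * s) * (K + 1)) := by rw [heq]; ring)
  have := main (right_mem_Icc.2 hS)
  refine this.trans (le_of_eq ?_)
  calc c₀ * |k| * Real.exp ((K + 1) * S)
      = c * |k| * (Real.exp (-((K + 1) * S)) * Real.exp ((K + 1) * S)) := by rw [hc₀]; ring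
    _ = c * |k| := by rw [← Real.exp_add]; simp

/-- Two-sided global version. -/
lemma aux_key' {E : Type*} [NormedAddCommGroup E] [NormedSpace ℝ E] [ProperSpace E]
    {D : E → E} (hD : ContDiff ℝ 1 D) (z : ℝ → ℝ → E) (u : ℝ → E) (τ₀ S : ℝ)
    (hz : ∀ τ s, HasDerivAt (z τ) (D (z τ s)) s)
    (hu : ∀ s, HasDerivAt u (fderiv ℝ D (z τ₀ s) (u s)) s)
    (h0 : HasDerivAt (fun τ => z τ 0) (u 0) τ₀) :
    HasDerivAt (fun τ => z τ S) (u S) τ₀ := by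
  rcases le_total 0 S with hS | hS
  · exact aux_key hD z u τ₀ S hS (fun τ s _ => hz τ s) (fun s _ => hu s) h0
  · have hneg : ∀ s : ℝ, HasDerivAt (fun s : ℝ => -s) (-1) s := fun s => hasDerivAt_neg s
    have := aux_key (D := fun x => - D x) hD.neg (fun τ s => z τ (-s)) (fun s => u (-s)) τ₀ (-S)
      (by linarith)
      (fun τ s _ => by
        have := (hz τ (-s)).scomp s (hneg s)
        simpa [Function.comp_def] using this)
      (fun s _ => by
        have := (hu (-s)).scomp s (hneg s)
        have h2 : fderiv ℝ (fun x => - D x) (z τ₀ (-s)) = - fderiv ℝ D (z τ₀ (-s)) := by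
          exact fderiv_fun_neg
        rw [h2]
        simpa [Function.comp_def] using this)
      (by simpa using h0)
    simpa using this


/-- A smooth vector field `X` with global flow `φ` is homogeneous of
degree `ζ` with respect to a smooth vector field `D` with global flow `ψ`
(`[D,X] = ζ X`) if and only if `φ_t ∘ ψ_s = ψ_s ∘ φ_{e^{ζ s} t}`. -/
theorem homogeneous_iff_flow_commutation
    (n : ℕ) (X D : (Fin n → ℝ) → (Fin n → ℝ))
    (hX : ContDiff ℝ (⊤ : ℕ∞) X) (hD : ContDiff ℝ (⊤ : ℕ∞) D) (ζ : ℝ)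
    (φ ψ : ℝ → (Fin n → ℝ) → (Fin n → ℝ))
    (hφ0 : ∀ x, φ 0 x = x)
    (hφ : ∀ (t : ℝ) (x : Fin n → ℝ), HasDerivAt (fun τ => φ τ x) (X (φ t x)) t)
    (hψ0 : ∀ x, ψ 0 x = x)
    (hψ : ∀ (s : ℝ) (x : Fin n → ℝ), HasDerivAt (fun τ => ψ τ x) (D (ψ s x)) s) :
    (∀ x, fderiv ℝ X x (D x) - fderiv ℝ D x (X x) = ζ • X x) ↔
      (∀ (s t : ℝ) (x : Fin n → ℝ),
        φ t (ψ s x) = ψ s (φ (Real.exp (ζ * s) * t) x)) := by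
  have hX1 : ContDiff ℝ 1 X := hX.of_le (by exact_mod_cast le_top)
  have hD1 : ContDiff ℝ 1 D := hD.of_le (by exact_mod_cast le_top)
  have hXd : ∀ x, HasFDerivAt X (fderiv ℝ X x) x := fun x =>
    (hX1.differentiable (by norm_num) x).hasFDerivAt
  have hexp : ∀ s : ℝ, HasDerivAt (fun s : ℝ => Real.exp (ζ * s)) (Real.exp (ζ * s) * ζ) s := by
    intro s
    have : HasDerivAt (fun s : ℝ => ζ * s) ζ s := by
      simpa using (hasDerivAt_id s).const_mul ζ
    exact this.exp
  constructor
  · intro hom s t x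
    have hexp' : ∀ s : ℝ, HasDerivAt (fun s : ℝ => Real.exp (-ζ * s))
        (Real.exp (-ζ * s) * (-ζ)) s := by
      intro s
      have : HasDerivAt (fun s : ℝ => -ζ * s) (-ζ) s := by
        simpa using (hasDerivAt_id s).const_mul (-ζ)
      exact this.exp
    have hder : ∀ τ₀, HasDerivAt (fun τ => ψ s (φ τ x))
        (Real.exp (-ζ * s) • X (ψ s (φ τ₀ x))) τ₀ := by
      intro τ₀
      refine aux_key' hD1 (fun τ σ => ψ σ (φ τ x))
        (fun σ => Real.exp (-ζ * σ) • X (ψ σ (φ τ₀ x))) τ₀ s (fun τ σ => hψ σ _) ?_ ?_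
      · intro σ
        have h1 := (hexp' σ).smul ((hXd (ψ σ (φ τ₀ x))).comp_hasDerivAt σ (hψ σ (φ τ₀ x)))
        refine h1.congr_deriv ?_
        have h2 := hom (ψ σ (φ τ₀ x))
        rw [sub_eq_iff_eq_add] at h2
        simp only [Function.comp_apply]
        rw [h2, map_smul, smul_add, smul_smul, mul_neg, neg_smul]
        abel
      · simpa [hψ0] using hφ τ₀ x
    have hcurve : ∀ r, HasDerivAt (fun r => ψ s (φ (Real.exp (ζ * s) * r) x))
        (X (ψ s (φ (Real.exp (ζ * s) * r) x))) r := by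
      intro r
      have h1 : HasDerivAt (fun r : ℝ => Real.exp (ζ * s) * r) (Real.exp (ζ * s)) r := by
        simpa using (hasDerivAt_id r).const_mul (Real.exp (ζ * s))
      have h2 := (hder (Real.exp (ζ * s) * r)).scomp r h1
      refine h2.congr_deriv ?_
      rw [smul_smul, ← Real.exp_add]
      simp
    have := aux_uniq hX1 (p := fun r => φ r (ψ s x))
      (q := fun r => ψ s (φ (Real.exp (ζ * s) * r) x)) (a := -(|t| + 1)) (b := |t| + 1) (t₀ := 0)
      ⟨by have := abs_nonneg t; linarith, by have := abs_nonneg t; linarith⟩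
      (fun r _ => hφ r _) (fun r _ => hcurve r) (by simp [hφ0])
    exact this ⟨by have := neg_abs_le t; linarith, by have := le_abs_self t; linarith⟩
  · intro hcomm x
    have hfD : ContDiff ℝ 1 (fderiv ℝ D) := hD.fderiv_right (m := 1) (by
      have : ((2 : ℕ∞) : WithTop ℕ∞) ≤ ((⊤ : ℕ∞) : WithTop ℕ∞) := WithTop.coe_le_coe.2 le_top
      have h2 : (1 + 1 : WithTop ℕ∞) = ((2 : ℕ∞) : WithTop ℕ∞) := by norm_num
      rw [h2]; exact this)
    have hF : ContDiff ℝ 1 (fun q : (Fin n → ℝ) × (Fin n → ℝ) => (D q.1, fderiv ℝ D q.1 q.2)) :=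
      (hD1.comp contDiff_fst).prodMk ((hfD.comp contDiff_fst).clm_apply contDiff_snd)
    obtain ⟨α, hα0, ε, hε, hα⟩ :=
      (hF.contDiffAt (x := (x, X x))).exists_forall_mem_closedBall_exists_eq_forall_mem_Ioo_hasDerivAt₀ 0
    have hα' : ∀ s ∈ Icc (-(ε/2)) (ε/2), HasDerivAt α (D (α s).1, fderiv ℝ D (α s).1 (α s).2) s :=
      fun s hs => hα s ⟨by linarith [hs.1], by linarith [hs.2]⟩
    have hp : EqOn (fun s => (α s).1) (fun s => ψ s x) (Ioo (-(ε/2)) (ε/2)) :=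
      aux_uniq hD1 (t₀ := 0) ⟨by linarith, by linarith⟩ (fun s hs => (hα' s hs).fst)
        (fun s _ => hψ s x) (by simp [hα0, hψ0])
    have hu : ∀ s ∈ Ioo (-(ε/2)) (ε/2),
        HasDerivAt (fun s => (α s).2) (fderiv ℝ D (ψ s x) (α s).2) s := by
      intro s hs
      have h1 := (hα' s (Ioo_subset_Icc_self hs)).snd
      have h2 : (α s).1 = ψ s x := hp hs
      rwa [h2] at h1
    have hval : ∀ s ∈ Icc 0 (ε/4), X (ψ s x) = Real.exp (ζ * s) • (α s).2 := by
      intro s hs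
      have h1 := aux_key hD1 (fun τ σ => ψ σ (φ τ x)) (fun σ => (α σ).2) 0 s hs.1
        (fun τ σ _ => hψ σ _)
        (fun σ hσ => by
          simpa [hφ0] using hu σ ⟨by linarith [hσ.1], by linarith [hσ.2, hs.2]⟩)
        (by simpa [hψ0, hα0, hφ0] using hφ 0 x)
      have h2 : HasDerivAt (fun r : ℝ => Real.exp (ζ * s) * r) (Real.exp (ζ * s)) 0 := by
        simpa using (hasDerivAt_id (0 : ℝ)).const_mul (Real.exp (ζ * s))
      have h3 := HasDerivAt.scomp_of_eq (0 : ℝ) h1 h2 (by simp)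
      have h4 := hφ 0 (ψ s x)
      have h5 : (fun τ => φ τ (ψ s x)) =
          (fun τ => ψ s (φ τ x)) ∘ (fun r : ℝ => Real.exp (ζ * s) * r) := by
        funext τ; exact hcomm s τ x
      rw [h5, hφ0] at h4
      exact h4.unique h3
    have d1 : HasDerivAt (fun s => X (ψ s x)) (fderiv ℝ X x (D x)) 0 := by
      have := (hXd (ψ 0 x)).comp_hasDerivAt 0 (hψ 0 x)
      simpa [hψ0, Function.comp_def] using this
    have d2 : HasDerivAt (fun s => Real.exp (ζ * s) • (α s).2)
        (fderiv ℝ D x (X x) + ζ • X x) 0 := by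
      have := (hexp 0).smul (hu 0 ⟨by linarith, by linarith⟩)
      refine HasDerivAt.congr_deriv this ?_
      simp [hψ0, hα0]
    have h0mem : (0 : ℝ) ∈ Icc 0 (ε/4) := ⟨le_rfl, by positivity⟩
    have d3 : HasDerivWithinAt (fun s => X (ψ s x)) (fderiv ℝ D x (X x) + ζ • X x)
        (Icc 0 (ε/4)) 0 :=
      d2.hasDerivWithinAt.congr hval (hval 0 h0mem)
    have hun := uniqueDiffOn_Icc (show (0 : ℝ) < ε/4 by positivity) 0 h0mem
    have := hun.eq_deriv _ d1.hasDerivWithinAt d3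
    rw [this]; abel
end

section
/- Let X and D be smooth vector fields on ℝⁿ admitting global flows φ and ψ respectively, let ξ : ℝⁿ → ℝ be a smooth function, and suppose [D,X](x) = ξ(x)·X(x) for all x ∈ ℝⁿ. Define ρ(s,x) := ∫₀^s ξ(ψ(τ,x)) dτ. Then for all s ∈ ℝ and all x ∈ ℝⁿ, the pullback of X under ψ_s scales exponentially: X(ψ(s,x)) = e^{ρ(s,x)} · D_x ψ_s(x)[X(x)], where D_x ψ_s(x) denotes the Fréchet derivative of the map y ↦ ψ(s,y) at x. -/
open Set Metric Topology
open scoped NNReal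

section helpers

variable {E : Type*} [NormedAddCommGroup E] [NormedSpace ℝ E] [FiniteDimensional ℝ E]

lemma aux_bound_fderiv {D : E → E} (hD : ContDiff ℝ (⊤ : ℕ∞) D) (R : ℝ) :
    ∃ M : ℝ≥0, ∀ p ∈ closedBall (0 : E) R, ‖fderiv ℝ D p‖ ≤ M := by
  have : ProperSpace E := FiniteDimensional.proper ℝ E
  have hc : Continuous (fderiv ℝ D) := hD.continuous_fderiv (by simp)
  obtain ⟨C, hC⟩ := (isCompact_closedBall (0 : E) R).exists_bound_of_continuousOn hc.continuousOn
  exact ⟨C.toNNReal, fun p hp => (hC p hp).trans (Real.le_coe_toNNReal C)⟩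

lemma aux_bound_curve {f : ℝ → E} (hf : Continuous f) (T : ℝ) :
    ∃ R : ℝ, ∀ t ∈ Icc 0 T, ‖f t‖ ≤ R :=
  isCompact_Icc.exists_bound_of_continuousOn hf.continuousOn

lemma aux_core {D : E → E} (hD : ContDiff ℝ (⊤ : ℕ∞) D) {ψ : ℝ → E → E}
    (hψ0 : ∀ x, ψ 0 x = x)
    (hψ : ∀ (s : ℝ) (x : E), HasDerivAt (fun τ => ψ τ x) (D (ψ s x)) s)
    (x : E) (T : ℝ) (ε : ℝ) (hε : 0 < ε) :
    ∃ δ > 0, ∀ v : E, v ≠ 0 → ‖v‖ < δ → ∀ V : ℝ → E, V 0 = v →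
      ContinuousOn V (Icc 0 T) →
      (∀ t ∈ Ico 0 T, HasDerivWithinAt V (fderiv ℝ D (ψ t x) (V t)) (Ici t) t) →
      ∀ t ∈ Icc 0 T, ‖ψ t (x + v) - ψ t x - V t‖ ≤ ε * ‖v‖ := by
  have : ProperSpace E := FiniteDimensional.proper ℝ E
  have hc : Continuous (fderiv ℝ D) := hD.continuous_fderiv (by simp)
  have hdiff : Differentiable ℝ D := hD.differentiable (by simp)
  have hcont : ∀ y, Continuous (fun τ => ψ τ y) := fun y =>
    continuous_iff_continuousAt.2 fun s => (hψ s y).continuousAt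
  obtain ⟨R₀, hR₀⟩ := aux_bound_curve (hcont x) T
  obtain ⟨M, hM⟩ := aux_bound_fderiv hD (R₀ + 1)
  set C := Real.exp ((M + 1) * T) with hC
  have hCpos : 0 < C := Real.exp_pos _
  have hexp : ∀ t ∈ Icc 0 T, Real.exp ((M + 1) * t) ≤ C := fun t ht => by
    apply Real.exp_le_exp.2
    have := ht.2
    gcongr
  have hexp1 : ∀ t ∈ Icc 0 T, 1 ≤ Real.exp ((M + 1) * t) := fun t ht => by
    apply Real.one_le_exp
    have := ht.1
    positivity
  have huc := (isCompact_closedBall (0 : E) (R₀ + 1)).uniformContinuousOn_of_continuous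
    hc.continuousOn
  rw [Metric.uniformContinuousOn_iff] at huc
  set ε₁ := ε / (2 * C ^ 2) with hε₁
  have hε₁pos : 0 < ε₁ := by positivity
  obtain ⟨δ₁, hδ₁, hδ₁'⟩ := huc ε₁ hε₁pos
  refine ⟨min 1 δ₁ / C, by positivity, ?_⟩
  intro v hv hvδ V hV0 hVc hV t ht
  have hvpos : 0 < ‖v‖ := norm_pos_iff.2 hv
  have hvC : ‖v‖ * C < min 1 δ₁ := (lt_div_iff₀ hCpos).1 hvδ
  have hder : ∀ s : ℝ, ∀ c : ℝ, HasDerivAt (fun t : ℝ => c * Real.exp ((M + 1) * t))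
      ((M + 1) * (c * Real.exp ((M + 1) * s))) s := by
    intro s c
    have h1 : HasDerivAt (fun t : ℝ => ((M : ℝ) + 1) * t) ((M : ℝ) + 1) s := by
      simpa using (hasDerivAt_id s).const_mul ((M : ℝ) + 1)
    refine ((h1.exp).const_mul c).congr_deriv ?_
    ring
  have hin : ∀ s ∈ Icc 0 T, ψ s x ∈ closedBall (0 : E) (R₀ + 1) := fun s hs => by
    rw [mem_closedBall_zero_iff]; linarith [hR₀ s hs]
  have hin' : ∀ s ∈ Icc 0 T, ‖ψ s (x + v) - ψ s x‖ ≤ 1 →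
      ψ s (x + v) ∈ closedBall (0 : E) (R₀ + 1) := fun s hs h => by
    rw [mem_closedBall_zero_iff]
    have := norm_add_le (ψ s x) (ψ s (x + v) - ψ s x)
    rw [add_sub_cancel] at this
    linarith [hR₀ s hs]
  -- first estimate
  have hu : ∀ ⦃s⦄, s ∈ Icc 0 T → ‖ψ s (x + v) - ψ s x‖ ≤ ‖v‖ * Real.exp ((M + 1) * s) := by
    apply image_norm_le_of_norm_deriv_right_lt_deriv_boundary
      (f' := fun s => D (ψ s (x + v)) - D (ψ s x))
    · exact ((hcont _).sub (hcont _)).continuousOn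
    · intro s _
      exact ((hψ s (x + v)).sub (hψ s x)).hasDerivWithinAt
    · simp [hψ0]
    · intro s
      exact hder s _
    · intro s hs hs'
      have hs1 := Ico_subset_Icc_self hs
      have hle : ‖ψ s (x + v) - ψ s x‖ ≤ 1 := by
        rw [hs']
        have : ‖v‖ * Real.exp ((M + 1) * s) ≤ ‖v‖ * C := by gcongr; exact hexp s hs1
        linarith [min_le_left 1 δ₁]
      have := (convex_closedBall (0 : E) (R₀ + 1)).norm_image_sub_le_of_norm_fderiv_le (𝕜 := ℝ)
        (fun p _ => hdiff p) hM (hin s hs1) (hin' s hs1 hle)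
      rw [hs'] at this
      have hp : 0 < ‖v‖ * Real.exp ((M + 1) * s) := by positivity
      linarith
  have hu1 : ∀ s ∈ Icc 0 T, ‖ψ s (x + v) - ψ s x‖ ≤ ‖v‖ * C := fun s hs =>
    (hu hs).trans (by gcongr; exact hexp s hs)
  -- second estimate
  have hw : ∀ ⦃s⦄, s ∈ Icc 0 T → ‖ψ s (x + v) - ψ s x - V s‖ ≤
      (ε * ‖v‖ / C) * Real.exp ((M + 1) * s) := by
    apply image_norm_le_of_norm_deriv_right_lt_deriv_boundary
      (f' := fun s => D (ψ s (x + v)) - D (ψ s x) - fderiv ℝ D (ψ s x) (V s))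
    · exact (((hcont _).sub (hcont _)).continuousOn).sub hVc
    · intro s hs
      exact (((hψ s (x + v)).sub (hψ s x)).hasDerivWithinAt).sub (hV s hs)
    · simp only [hψ0, hV0]
      rw [add_sub_cancel_left, sub_self, norm_zero]
      positivity
    · intro s
      exact hder s _
    · intro s hs hs'
      have hs1 := Ico_subset_Icc_self hs
      have hu2 := hu1 s hs1
      have hle : ‖ψ s (x + v) - ψ s x‖ ≤ 1 := by
        linarith [min_le_left 1 δ₁]
      have hlt : ‖ψ s (x + v) - ψ s x‖ < δ₁ := by
        linarith [min_le_right 1 δ₁]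
      have hrem := ((convex_closedBall (0 : E) (R₀ + 1)).inter
        (convex_ball (ψ s x) δ₁)).norm_image_sub_le_of_norm_fderiv_le' (𝕜 := ℝ)
        (f := D) (φ := fderiv ℝ D (ψ s x)) (C := ε₁) (x := ψ s x) (y := ψ s (x + v))
        (fun p _ => hdiff p)
        (fun p hp => by
          rw [← dist_eq_norm]
          exact (hδ₁' p hp.1 _ (hin s hs1) hp.2).le)
        ⟨hin s hs1, mem_ball_self hδ₁⟩
        ⟨hin' s hs1 hle, by rwa [mem_ball, dist_eq_norm]⟩
      set B := (ε * ‖v‖ / C) * Real.exp ((M + 1) * s) with hB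
      have hA : ‖fderiv ℝ D (ψ s x) (ψ s (x + v) - ψ s x - V s)‖ ≤ M * B := by
        rw [← hs']
        exact (ContinuousLinearMap.le_opNorm _ _).trans (by gcongr; exact hM _ (hin s hs1))
      have heq : D (ψ s (x + v)) - D (ψ s x) - fderiv ℝ D (ψ s x) (V s) =
          (D (ψ s (x + v)) - D (ψ s x) - fderiv ℝ D (ψ s x) (ψ s (x + v) - ψ s x)) +
          fderiv ℝ D (ψ s x) (ψ s (x + v) - ψ s x - V s) := by
        simp only [map_sub]; abel
      have h1 : ε₁ * ‖ψ s (x + v) - ψ s x‖ ≤ ε₁ * (‖v‖ * C) := by gcongr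
      have h2 : ε₁ * (‖v‖ * C) < ε * ‖v‖ / C := by
        have : ε₁ * (‖v‖ * C) = (ε * ‖v‖ / C) / 2 := by
          rw [hε₁]; field_simp
        rw [this]
        have : 0 < ε * ‖v‖ / C := by positivity
        linarith
      have h3 : ε * ‖v‖ / C ≤ B := by
        have : 0 < ε * ‖v‖ / C := by positivity
        nlinarith [hexp1 s hs1]
      rw [heq]
      have := norm_add_le (D (ψ s (x + v)) - D (ψ s x) - fderiv ℝ D (ψ s x) (ψ s (x + v) - ψ s x))
        (fderiv ℝ D (ψ s x) (ψ s (x + v) - ψ s x - V s))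
      linarith
  refine (hw ht).trans ?_
  calc (ε * ‖v‖ / C) * Real.exp ((M + 1) * t) ≤ (ε * ‖v‖ / C) * C := by
        gcongr; exact hexp t ht
    _ = ε * ‖v‖ := by field_simp

lemma aux_lin_exists (A : ℝ → E →L[ℝ] E) (hA : Continuous A) (T : ℝ) (hT : 0 ≤ T) (M : ℝ≥0)
    (hM : ∀ t ∈ Icc 0 T, ‖A t‖ ≤ M) (hMT : 2 * M * T ≤ 1) :
    ∃ L : ℝ → E →L[ℝ] E, L 0 = ContinuousLinearMap.id ℝ E ∧
      ∀ t ∈ Icc 0 T, HasDerivWithinAt L ((A t).comp (L t)) (Icc 0 T) t := by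
  have : CompleteSpace E := FiniteDimensional.complete ℝ E
  have hP : IsPicardLindelof (fun t (B : E →L[ℝ] E) => (A t).comp B)
      (⟨0, le_rfl, hT⟩ : Icc 0 T) (ContinuousLinearMap.id ℝ E) 1 0 (2 * M) M := by
    refine ⟨?_, ?_, ?_, ?_⟩
    · intro t ht
      apply LipschitzOnWith.of_dist_le_mul
      intro B _ B' _
      rw [dist_eq_norm, dist_eq_norm, ← ContinuousLinearMap.comp_sub]
      exact (ContinuousLinearMap.opNorm_comp_le _ _).trans (by gcongr; exact hM t ht)
    · intro B _
      exact (hA.clm_comp continuous_const).continuousOn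
    · intro t ht B hB
      have hB2 : ‖B‖ ≤ 2 := by
        rw [mem_closedBall, dist_eq_norm] at hB
        have h1 := norm_add_le (B - ContinuousLinearMap.id ℝ E) (ContinuousLinearMap.id ℝ E)
        rw [sub_add_cancel] at h1
        have h2 : ‖ContinuousLinearMap.id ℝ E‖ ≤ 1 := ContinuousLinearMap.norm_id_le
        simp at hB
        linarith
      refine (ContinuousLinearMap.opNorm_comp_le _ _).trans ?_
      have := mul_le_mul (hM t ht) hB2 (norm_nonneg _) M.2
      push_cast
      linarith
    · simp [hT]
      linarith
  obtain ⟨L, h0, hL⟩ := hP.exists_eq_forall_mem_Icc_hasDerivWithinAt₀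
  exact ⟨L, h0, hL⟩

lemma aux_small_diff {D : E → E} (hD : ContDiff ℝ (⊤ : ℕ∞) D) {ψ : ℝ → E → E}
    (hψ0 : ∀ x, ψ 0 x = x)
    (hψ : ∀ (s : ℝ) (x : E), HasDerivAt (fun τ => ψ τ x) (D (ψ s x)) s)
    (x : E) (T : ℝ) (hT : 0 ≤ T) (M : ℝ≥0)
    (hM : ∀ t ∈ Icc 0 T, ‖fderiv ℝ D (ψ t x)‖ ≤ M) (hMT : 2 * M * T ≤ 1) :
    DifferentiableAt ℝ (ψ T) x := by
  have hc : Continuous (fderiv ℝ D) := hD.continuous_fderiv (by simp)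
  have hcont : Continuous (fun τ => ψ τ x) :=
    continuous_iff_continuousAt.2 fun s => (hψ s x).continuousAt
  obtain ⟨L, hL0, hL⟩ := aux_lin_exists (fun t => fderiv ℝ D (ψ t x)) (hc.comp hcont) T hT M hM hMT
  refine HasFDerivAt.differentiableAt (f' := L T) ?_
  rw [hasFDerivAt_iff_isLittleO_nhds_zero, Asymptotics.isLittleO_iff]
  intro ε hε
  obtain ⟨δ, hδ, h⟩ := aux_core hD hψ0 hψ x T ε hε
  filter_upwards [ball_mem_nhds (0 : E) hδ] with v hv
  rw [mem_ball_zero_iff] at hv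
  by_cases hv0 : v = 0
  · simp [hv0]
  refine h v hv0 hv (fun t => L t v) (by simp [hL0]) ?_ ?_ T ⟨hT, le_rfl⟩
  · intro t ht
    exact ((hL t ht).continuousWithinAt.clm_apply continuousWithinAt_const)
  · intro t ht
    have h1 := (hL t (Ico_subset_Icc_self ht)).mono_of_mem_nhdsWithin
      (Icc_mem_nhdsGE_of_mem ht)
    simpa using h1.clm_apply (hasDerivWithinAt_const t (Ici t) v)

lemma aux_group {D : E → E} (hD : ContDiff ℝ (⊤ : ℕ∞) D) {ψ : ℝ → E → E}
    (hψ0 : ∀ x, ψ 0 x = x)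
    (hψ : ∀ (s : ℝ) (x : E), HasDerivAt (fun τ => ψ τ x) (D (ψ s x)) s)
    (x : E) (s t : ℝ) (ht : 0 ≤ t) : ψ (t + s) x = ψ t (ψ s x) := by
  have hdiff : Differentiable ℝ D := hD.differentiable (by simp)
  have hcont : ∀ y, Continuous (fun τ => ψ τ y) := fun y =>
    continuous_iff_continuousAt.2 fun s => (hψ s y).continuousAt
  have hc1 : Continuous (fun τ => ψ (τ + s) x) := (hcont x).comp (continuous_id.add continuous_const)
  obtain ⟨R₁, hR₁⟩ := aux_bound_curve hc1 t
  obtain ⟨R₂, hR₂⟩ := aux_bound_curve (hcont (ψ s x)) t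
  obtain ⟨M, hM⟩ := aux_bound_fderiv hD (max R₁ R₂)
  have hlip : LipschitzOnWith M D (closedBall 0 (max R₁ R₂)) :=
    (convex_closedBall (0 : E) (max R₁ R₂)).lipschitzOnWith_of_nnnorm_fderiv_le (𝕜 := ℝ)
      (fun p _ => hdiff p) (fun p hp => by exact_mod_cast hM p hp)
  refine ODE_solution_unique_of_mem_Icc_right (v := fun _ => D)
    (s := fun _ => closedBall 0 (max R₁ R₂)) (K := M) (a := 0) (b := t)
    (f := fun τ => ψ (τ + s) x) (g := fun τ => ψ τ (ψ s x))
    (fun _ _ => hlip) hc1.continuousOn ?_ ?_ (hcont _).continuousOn ?_ ?_ ?_ ⟨ht, le_rfl⟩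
  · intro τ _
    exact ((hψ (τ + s) x).comp_add_const τ s).hasDerivWithinAt
  · intro τ hτ
    exact mem_closedBall_zero_iff.2 ((hR₁ τ (Ico_subset_Icc_self hτ)).trans (le_max_left _ _))
  · intro τ _
    exact (hψ τ _).hasDerivWithinAt
  · intro τ hτ
    exact mem_closedBall_zero_iff.2 ((hR₂ τ (Ico_subset_Icc_self hτ)).trans (le_max_right _ _))
  · simp [hψ0]

lemma aux_diff {D : E → E} (hD : ContDiff ℝ (⊤ : ℕ∞) D) {ψ : ℝ → E → E}
    (hψ0 : ∀ x, ψ 0 x = x)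
    (hψ : ∀ (s : ℝ) (x : E), HasDerivAt (fun τ => ψ τ x) (D (ψ s x)) s)
    (x : E) (S : ℝ) (hS : 0 ≤ S) : DifferentiableAt ℝ (ψ S) x := by
  have hcont : Continuous (fun τ => ψ τ x) :=
    continuous_iff_continuousAt.2 fun s => (hψ s x).continuousAt
  obtain ⟨R, hR⟩ := aux_bound_curve hcont S
  obtain ⟨M, hM⟩ := aux_bound_fderiv hD R
  obtain ⟨N, hN⟩ := exists_nat_gt (2 * M * S)
  have hNpos : (0 : ℝ) < N := lt_of_le_of_lt (by positivity) hN
  set T := S / N with hT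
  have hT0 : 0 ≤ T := by positivity
  have hNT : N * T = S := by rw [hT]; field_simp
  have key : ∀ k : ℕ, k ≤ N → DifferentiableAt ℝ (ψ (k * T)) x := by
    intro k
    induction k with
    | zero =>
      intro _
      have : ψ ((0 : ℕ) * T) = id := by ext y; simp [hψ0]
      rw [this]; exact differentiableAt_id
    | succ k ih =>
      intro hk
      have h1 := ih (by omega)
      have hk' : ((k : ℝ) + 1) * T ≤ S := by
        rw [← hNT]; gcongr; exact_mod_cast hk
      have : ψ ((k + 1 : ℕ) * T) = ψ T ∘ ψ (k * T) := by
        ext y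
        have := aux_group hD hψ0 hψ y (k * T) T hT0
        rw [Function.comp_apply, ← this]
        congr 1
        push_cast; ring
      rw [this]
      refine DifferentiableAt.comp x ?_ h1
      refine aux_small_diff hD hψ0 hψ _ T hT0 M ?_ ?_
      · intro t ht
        rw [← aux_group hD hψ0 hψ x (k * T) t ht.1]
        apply hM
        rw [mem_closedBall_zero_iff]
        apply hR
        have := ht.1
        have := ht.2
        constructor
        · positivity
        · linarith
      · rw [hT, ← mul_div_assoc, div_le_one hNpos]
        exact hN.le
  have := key N le_rfl
  rwa [hNT] at this

lemma aux_main {X D : E → E}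
    (hX : ContDiff ℝ (⊤ : ℕ∞) X) (hD : ContDiff ℝ (⊤ : ℕ∞) D)
    {ξ : E → ℝ} (hξ : Continuous ξ) {ψ : ℝ → E → E}
    (hψ0 : ∀ x, ψ 0 x = x)
    (hψ : ∀ (s : ℝ) (x : E), HasDerivAt (fun τ => ψ τ x) (D (ψ s x)) s)
    (hbracket : ∀ x, fderiv ℝ X x (D x) - fderiv ℝ D x (X x) = ξ x • X x)
    (s : ℝ) (hs : 0 ≤ s) (x : E) :
    X (ψ s x) = Real.exp (∫ τ in (0:ℝ)..s, ξ (ψ τ x)) • (fderiv ℝ (ψ s) x) (X x) := by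
  have hcont : Continuous (fun τ => ψ τ x) :=
    continuous_iff_continuousAt.2 fun s => (hψ s x).continuousAt
  set V : ℝ → E := fun t => Real.exp (-∫ τ in (0:ℝ)..t, ξ (ψ τ x)) • X (ψ t x) with hVdef
  have hV : ∀ t, HasDerivAt V (fderiv ℝ D (ψ t x) (V t)) t := by
    intro t
    have h1 : HasDerivAt (fun t => ∫ τ in (0:ℝ)..t, ξ (ψ τ x)) (ξ (ψ t x)) t :=
      ((hξ.comp hcont).integral_hasStrictDerivAt 0 t).hasDerivAt
    have h2 : HasDerivAt (fun t => X (ψ t x)) (fderiv ℝ X (ψ t x) (D (ψ t x))) t :=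
      ((hX.differentiable (by simp)) (ψ t x)).hasFDerivAt.comp_hasDerivAt t (hψ t x)
    have h3 := (h1.neg.exp).smul h2
    refine HasDerivAt.congr_deriv (f := V) h3 ?_
    rw [eq_add_of_sub_eq (hbracket (ψ t x))]
    simp only [hVdef, map_smul, Pi.neg_apply]
    module
  have hV0 : V 0 = X x := by simp [hVdef, hψ0]
  have hVs : HasDerivAt (fun h : ℝ => ψ s (x + h • X x)) (V s) 0 := by
    by_cases hXx : X x = 0
    · have hz : V s = 0 := by
        have hc : Continuous (fderiv ℝ D) := hD.continuous_fderiv (by simp)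
        obtain ⟨M, hM⟩ := (isCompact_Icc (a := (0 : ℝ)) (b := s)).exists_bound_of_continuousOn
          (hc.comp hcont).continuousOn
        refine eq_zero_of_abs_deriv_le_mul_abs_self_of_eq_zero_right (K := M) (a := 0) (b := s)
          (f' := fun t => fderiv ℝ D (ψ t x) (V t))
          (fun t _ => (hV t).continuousAt.continuousWithinAt)
          (fun t _ => (hV t).hasDerivWithinAt) (hV0.trans hXx) ?_ s ⟨hs, le_rfl⟩
        intro t ht
        exact (ContinuousLinearMap.le_opNorm _ _).trans
          (by gcongr; exact hM t (Ico_subset_Icc_self ht))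
      rw [hz]
      simp only [hXx, smul_zero, add_zero]
      exact hasDerivAt_const _ _
    · rw [hasDerivAt_iff_isLittleO_nhds_zero, Asymptotics.isLittleO_iff]
      intro ε hε
      have hXn : 0 < ‖X x‖ := norm_pos_iff.2 hXx
      obtain ⟨δ, hδ, h⟩ := aux_core hD hψ0 hψ x s (ε / ‖X x‖) (by positivity)
      filter_upwards [ball_mem_nhds (0 : ℝ) (show 0 < δ / ‖X x‖ by positivity)] with a ha
      rw [mem_ball_zero_iff, lt_div_iff₀ hXn] at ha
      by_cases ha0 : a = 0
      · simp [ha0]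
      have := h (a • X x) (smul_ne_zero ha0 hXx) (by rwa [norm_smul]) (fun t => a • V t)
        (by simp [hV0])
        (fun t _ => ((hV t).const_smul a).continuousAt.continuousWithinAt)
        (fun t _ => by
          rw [map_smul]
          exact ((hV t).const_smul a).hasDerivWithinAt) s ⟨hs, le_rfl⟩
      rw [norm_smul] at this
      simp only [zero_add, zero_smul, add_zero]
      refine this.trans (le_of_eq ?_)
      field_simp
  have hF := (aux_diff hD hψ0 hψ x s hs).hasFDerivAt
  have hline : HasDerivAt (fun h : ℝ => x + h • X x) (X x) 0 := by
    simpa using ((hasDerivAt_id (0 : ℝ)).smul_const (X x)).const_add x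
  have hF' : HasDerivAt (fun h : ℝ => ψ s (x + h • X x)) (fderiv ℝ (ψ s) x (X x)) 0 := by
    refine HasFDerivAt.comp_hasDerivAt (l := ψ s) (0 : ℝ) ?_ hline
    simpa using hF
  rw [← hVs.unique hF', hVdef]
  simp only
  rw [smul_smul, ← Real.exp_add, add_neg_cancel, Real.exp_zero, one_smul]

end helpers

/-- If `[D,X] = ξ·X` pointwise, then the pullback of `X` under the
dilation flow `ψ_s` scales exponentially:
`X(ψ(s,x)) = e^{ρ(s,x)} · D_x ψ_s(x)[X(x)]` with `ρ(s,x) = ∫₀^s ξ(ψ(τ,x)) dτ`. -/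
theorem pullback_scaling_of_state_dependent_homogeneous
    (n : ℕ) (X D : (Fin n → ℝ) → (Fin n → ℝ))
    (hX : ContDiff ℝ (⊤ : ℕ∞) X) (hD : ContDiff ℝ (⊤ : ℕ∞) D)
    (ξ : (Fin n → ℝ) → ℝ) (hξ : ContDiff ℝ (⊤ : ℕ∞) ξ)
    (φ ψ : ℝ → (Fin n → ℝ) → (Fin n → ℝ))
    (hφ0 : ∀ x, φ 0 x = x)
    (hφ : ∀ (t : ℝ) (x : Fin n → ℝ), HasDerivAt (fun τ => φ τ x) (X (φ t x)) t)
    (hψ0 : ∀ x, ψ 0 x = x)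
    (hψ : ∀ (s : ℝ) (x : Fin n → ℝ), HasDerivAt (fun τ => ψ τ x) (D (ψ s x)) s)
    (hbracket : ∀ x, fderiv ℝ X x (D x) - fderiv ℝ D x (X x) = ξ x • X x)
    (ρ : ℝ → (Fin n → ℝ) → ℝ)
    (hρ : ∀ (s : ℝ) (x : Fin n → ℝ), ρ s x = ∫ τ in (0:ℝ)..s, ξ (ψ τ x)) :
    ∀ (s : ℝ) (x : Fin n → ℝ),
      X (ψ s x) = Real.exp (ρ s x) • (fderiv ℝ (fun y => ψ s y) x) (X x) := by
  intro s x
  rw [hρ]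
  rcases le_total 0 s with hs | hs
  · exact aux_main hX hD hξ.continuous hψ0 hψ hbracket s hs x
  · have h := aux_main (X := X) (D := fun y => - D y) (ξ := fun y => - ξ y)
      (ψ := fun t y => ψ (-t) y) hX hD.neg hξ.continuous.neg (by simpa using hψ0)
      (fun t y => by
        have := (hψ (-t) y).scomp t (hasDerivAt_neg t)
        exact this.congr_deriv (by simp))
      (fun y => by
        have h1 : fderiv ℝ (fun y => - D y) y = - fderiv ℝ D y := fderiv_fun_neg
        rw [h1, map_neg, neg_apply, neg_smul, ← hbracket y]
        abel)
      (-s) (by linarith) x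
    have hint : (∫ τ in (0:ℝ)..(-s), - ξ (ψ (-τ) x)) = ∫ τ in (0:ℝ)..s, ξ (ψ τ x) := by
      rw [intervalIntegral.integral_neg,
        intervalIntegral.integral_comp_neg (fun τ => ξ (ψ τ x)), neg_neg, neg_zero,
        intervalIntegral.integral_symm, neg_neg]
    rw [hint] at h
    simpa only [neg_neg] using h
end

section
/- Let f̂ : ℝⁿ × ℝⁿ → ℝⁿ be smooth and suppose the combined state-error vector field Z(x,e) = (f̂(x,e), −f̂(x,e)) on ℝ^{2n} is homogeneous of degree ζ with respect to the standard dilation, i.e. there is r > 0 such that Z(λ^r x, λ^r e) = λ^{ζ+r}·Z(x,e) for all λ > 0 and (x,e) ∈ ℝ^{2n}. Suppose Z admits a global flow, with components denoted (φ^x(t,x₀,e₀), φ^e(t,x₀,e₀)). For c > 0, define the inter-execution time τ(x₀) := inf{t > 0 : |φ^e(t,x₀,0)| = c·|φ^x(t,x₀,0)|}. Then for all λ > 0 and x ∈ ℝⁿ, the set {t > 0 : |φ^e(t, λ^r x, 0)| = c·|φ^x(t, λ^r x, 0)|} equals {λ^{−ζ}·t : t > 0, |φ^e(t, x, 0)|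 = c·|φ^x(t, x, 0)|}; consequently τ(λ^r x) = λ^{−ζ}·τ(x). -/
theorem ode_unique_aux {E : Type*} [NormedAddCommGroup E] [NormedSpace ℝ E]
    (v : E → E) (hv : ContDiff ℝ 1 v) (f g : ℝ → E)
    (hf : ∀ t, HasDerivAt f (v (f t)) t) (hg : ∀ t, HasDerivAt g (v (g t)) t)
    (h0 : f 0 = g 0) (T : ℝ) (hT : 0 ≤ T) : f T = g T := by
  have cf : Continuous f := continuous_iff_continuousAt.2 fun t => (hf t).continuousAt
  have cg : Continuous g := continuous_iff_continuousAt.2 fun t => (hg t).continuousAt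
  have hK : IsCompact (f '' Set.Icc 0 T ∪ g '' Set.Icc 0 T) :=
    (isCompact_Icc.image cf).union (isCompact_Icc.image cg)
  obtain ⟨K, hK⟩ := (hv.locallyLipschitz.locallyLipschitzOn).exists_lipschitzOnWith_of_compact hK
  exact ODE_solution_unique_of_mem_Icc_right (v := fun _ => v)
    (s := fun _ => f '' Set.Icc 0 T ∪ g '' Set.Icc 0 T) (fun _ _ => hK)
    cf.continuousOn (fun t _ => (hf t).hasDerivWithinAt)
    (fun t ht => Or.inl ⟨t, ⟨ht.1, ht.2.le⟩, rfl⟩)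
    cg.continuousOn (fun t _ => (hg t).hasDerivWithinAt)
    (fun t ht => Or.inr ⟨t, ⟨ht.1, ht.2.le⟩, rfl⟩) h0 ⟨hT, le_rfl⟩

theorem ereal_sInf_scale_aux (a : ℝ) (ha : 0 < a) (S : Set ℝ) :
    sInf ((fun t : ℝ => (t : EReal)) '' ((fun t : ℝ => a * t) '' S)) =
      (a : EReal) * sInf ((fun t : ℝ => (t : EReal)) '' S) := by
  have ha' : (0 : EReal) < a := by exact_mod_cast ha
  apply le_antisymm
  · rw [← EReal.div_le_iff_le_mul ha' (EReal.coe_ne_top a)]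
    apply le_sInf
    rintro _ ⟨s, hs, rfl⟩
    rw [EReal.div_le_iff_le_mul ha' (EReal.coe_ne_top a)]
    apply sInf_le
    exact ⟨a * s, ⟨s, hs, rfl⟩, by simp⟩
  · apply le_sInf
    rintro _ ⟨_, ⟨s, hs, rfl⟩, rfl⟩
    simp only [EReal.coe_mul]
    exact mul_le_mul_of_nonneg_left (sInf_le ⟨s, hs, rfl⟩) ha'.le

/-- For a smooth `f̂` whose combined state-error vector field
`Z(x,e) = (f̂(x,e), −f̂(x,e))` is homogeneous of degree `ζ` w.r.t. the standard dilation
(`Z(λ^r x, λ^r e) = λ^{ζ+r} Z(x,e)`), the inter-execution times defined by the rule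
`|e| = c|x|` scale as `τ(λ^r x) = λ^{−ζ} τ(x)`. -/
theorem inter_execution_times_scaling_homogeneous
    (n : ℕ)
    (fhat : EuclideanSpace ℝ (Fin n) × EuclideanSpace ℝ (Fin n) → EuclideanSpace ℝ (Fin n))
    (hf : ContDiff ℝ (⊤ : ℕ∞) fhat)
    (ζ r : ℝ) (hr : 0 < r)
    (hhom : ∀ lam : ℝ, 0 < lam →
      ∀ x e : EuclideanSpace ℝ (Fin n),
        fhat (lam ^ r • x, lam ^ r • e) = lam ^ (ζ + r) • fhat (x, e))
    (φ : ℝ → EuclideanSpace ℝ (Fin n) × EuclideanSpace ℝ (Fin n) →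
      EuclideanSpace ℝ (Fin n) × EuclideanSpace ℝ (Fin n))
    (hφ0 : ∀ z, φ 0 z = z)
    (hφ : ∀ (t : ℝ) (z : EuclideanSpace ℝ (Fin n) × EuclideanSpace ℝ (Fin n)),
      HasDerivAt (fun τ => φ τ z) (fhat (φ t z), -fhat (φ t z)) t)
    (c : ℝ) (hc : 0 < c)
    (S : EuclideanSpace ℝ (Fin n) → Set ℝ)
    (hS : ∀ x, S x = {t : ℝ | 0 < t ∧ ‖(φ t (x, 0)).2‖ = c * ‖(φ t (x, 0)).1‖})
    (τ : EuclideanSpace ℝ (Fin n) → EReal)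
    (hτ : ∀ x, τ x = sInf ((fun t : ℝ => (t : EReal)) '' S x))
    (lam : ℝ) (hlam : 0 < lam) (x : EuclideanSpace ℝ (Fin n)) :
    S (lam ^ r • x) = (fun t : ℝ => lam ^ (-ζ) * t) '' S x ∧
      τ (lam ^ r • x) = ((lam ^ (-ζ) : ℝ) : EReal) * τ x := by
  have key : ∀ t, 0 ≤ t → φ t (lam ^ r • x, 0) = lam ^ r • φ (lam ^ ζ * t) (x, 0) := by
    intro t ht
    refine ode_unique_aux (fun z => (fhat z, -fhat z)) ?_ (fun t => φ t (lam ^ r • x, 0))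
      (fun t => lam ^ r • φ (lam ^ ζ * t) (x, 0)) (fun t => hφ t _) (fun t => ?_) ?_ t ht
    · have h1 : ContDiff ℝ 1 fhat := hf.of_le (by exact_mod_cast le_top)
      exact h1.prodMk h1.neg
    · have h1 : HasDerivAt (fun t : ℝ => lam ^ ζ * t) (lam ^ ζ) t := by
        simpa using (hasDerivAt_id t).const_mul (lam ^ ζ)
      have h2 := ((hφ (lam ^ ζ * t) (x, 0)).scomp t h1).const_smul (lam ^ r)
      convert h2 using 1
      · rfl
      have h3 := hhom lam hlam (φ (lam ^ ζ * t) (x, 0)).1 (φ (lam ^ ζ * t) (x, 0)).2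
      have h4 : lam ^ r • φ (lam ^ ζ * t) (x, 0) =
        (lam ^ r • (φ (lam ^ ζ * t) (x, 0)).1, lam ^ r • (φ (lam ^ ζ * t) (x, 0)).2) := rfl
      simp only [h4, h3]
      simp [Real.rpow_add hlam, smul_smul, mul_comm]
    · simp [hφ0]
  have hp : 0 < lam ^ r := Real.rpow_pos_of_pos hlam r
  have hz : 0 < lam ^ ζ := Real.rpow_pos_of_pos hlam ζ
  have hnz : 0 < lam ^ (-ζ) := Real.rpow_pos_of_pos hlam (-ζ)
  have hmul : lam ^ ζ * lam ^ (-ζ) = 1 := by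
    rw [← Real.rpow_add hlam]; simp
  have hiff : ∀ t, t ∈ S (lam ^ r • x) ↔ lam ^ ζ * t ∈ S x := by
    intro t
    rw [hS, hS, Set.mem_ofPred_eq, Set.mem_ofPred_eq, mul_pos_iff_of_pos_left hz]
    refine and_congr_right fun ht => ?_
    rw [key t ht.le, Prod.smul_snd, Prod.smul_fst, norm_smul, norm_smul, mul_left_comm,
      mul_right_inj' (norm_ne_zero_iff.2 hp.ne')]
  have hset : S (lam ^ r • x) = (fun t : ℝ => lam ^ (-ζ) * t) '' S x := by
    ext t
    rw [hiff]
    constructor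
    · intro h
      refine ⟨_, h, ?_⟩
      simp only
      rw [← mul_assoc, mul_comm (lam ^ (-ζ)), hmul, one_mul]
    · rintro ⟨s, hs, rfl⟩
      simp only
      rwa [← mul_assoc, hmul, one_mul]
  refine ⟨hset, ?_⟩
  rw [hτ, hτ, hset]
  exact ereal_sInf_scale_aux _ hnz _
end

section
/- Let f : ℝⁿ × ℝ^m → ℝⁿ and k : ℝⁿ → ℝ^m be continuous, let V : ℝⁿ → ℝ be continuously differentiable, let α and γ be class K∞ functions, and suppose that for all x, e ∈ ℝⁿ: ∇V(x)·f(x, k(x+e)) ≤ −α(|x|) + γ(|e|). Let 0 < σ < 1 and let x : [0,T] → ℝⁿ and e : [0,T] → ℝⁿ be such that x is differentiable with ẋ(t) = f(x(t), k(x(t)+e(t))) and γ(|e(t)|) ≤ σ·α(|x(t)|) for all t ∈ [0,T]. Then for all t ∈ [0,T], the function t ↦ V(x(t)) is differentiable with derivative at most (σ−1)·α(|x(t)|); in particular V(x(t)) is nonincreasing on [0,T]. -/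
/-- If `V` is an ISS Lyapunov function satisfying
`∇V(x)·f(x,k(x+e)) ≤ −α(|x|) + γ(|e|)` for class `K∞` functions `α, γ`, and along a
trajectory the triggering condition `γ(|e(t)|) ≤ σ α(|x(t)|)` holds with `0 < σ < 1`,
then `t ↦ V(x(t))` is differentiable with derivative at most `(σ−1)α(|x(t)|) ≤ 0`;
in particular it is nonincreasing on `[0,T]`. -/
theorem lyapunov_decrease_under_triggering
    (n m : ℕ)
    (f : EuclideanSpace ℝ (Fin n) → EuclideanSpace ℝ (Fin m) → EuclideanSpace ℝ (Fin n))
    (k : EuclideanSpace ℝ (Fin n) → EuclideanSpace ℝ (Fin m))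
    (hf : Continuous fun p : EuclideanSpace ℝ (Fin n) × EuclideanSpace ℝ (Fin m) =>
      f p.1 p.2)
    (hk : Continuous k)
    (V : EuclideanSpace ℝ (Fin n) → ℝ) (hV : ContDiff ℝ 1 V)
    (α γ : ℝ → ℝ)
    (hα : ContinuousOn α (Set.Ici 0) ∧ StrictMonoOn α (Set.Ici 0) ∧ α 0 = 0 ∧
      Filter.Tendsto α Filter.atTop Filter.atTop)
    (hγ : ContinuousOn γ (Set.Ici 0) ∧ StrictMonoOn γ (Set.Ici 0) ∧ γ 0 = 0 ∧
      Filter.Tendsto γ Filter.atTop Filter.atTop)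
    (hISS : ∀ x e : EuclideanSpace ℝ (Fin n),
      fderiv ℝ V x (f x (k (x + e))) ≤ -α ‖x‖ + γ ‖e‖)
    (σ : ℝ) (hσ0 : 0 < σ) (hσ1 : σ < 1)
    (T : ℝ) (hT : 0 ≤ T)
    (x e : ℝ → EuclideanSpace ℝ (Fin n))
    (hx : ∀ t ∈ Set.Icc 0 T,
      HasDerivWithinAt x (f (x t) (k (x t + e t))) (Set.Icc 0 T) t)
    (htrig : ∀ t ∈ Set.Icc 0 T, γ ‖e t‖ ≤ σ * α ‖x t‖) :
    (∀ t ∈ Set.Icc 0 T,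
      HasDerivWithinAt (fun τ => V (x τ)) (fderiv ℝ V (x t) (f (x t) (k (x t + e t))))
          (Set.Icc 0 T) t ∧
        fderiv ℝ V (x t) (f (x t) (k (x t + e t))) ≤ (σ - 1) * α ‖x t‖) ∧
      AntitoneOn (fun t => V (x t)) (Set.Icc 0 T) := by
  have key : ∀ t ∈ Set.Icc 0 T,
      HasDerivWithinAt (fun τ => V (x τ)) (fderiv ℝ V (x t) (f (x t) (k (x t + e t))))
          (Set.Icc 0 T) t ∧
        fderiv ℝ V (x t) (f (x t) (k (x t + e t))) ≤ (σ - 1) * α ‖x t‖ := by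
    intro t ht
    refine ⟨?_, ?_⟩
    · have hd : HasFDerivAt V (fderiv ℝ V (x t)) (x t) :=
        ((hV.differentiable one_ne_zero) (x t)).hasFDerivAt
      exact hd.comp_hasDerivWithinAt t (hx t ht)
    · have h1 := hISS (x t) (e t)
      have h2 := htrig t ht
      linarith
  refine ⟨key, ?_⟩
  refine antitoneOn_of_hasDerivWithinAt_nonpos
    (f' := fun t => fderiv ℝ V (x t) (f (x t) (k (x t + e t)))) (convex_Icc 0 T)
    (fun t ht => (key t ht).1.continuousWithinAt)
    (fun t ht => (key t (interior_subset ht)).1.mono interior_subset) ?_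
  intro t ht
  have hp : 0 ≤ α ‖x t‖ := by
    have h := hα.2.1.monotoneOn (Set.mem_Ici.2 le_rfl)
      (Set.mem_Ici.2 (norm_nonneg (x t))) (norm_nonneg (x t))
    rwa [hα.2.2.1] at h
  have h := (key t (interior_subset ht)).2
  show fderiv ℝ V (x t) (f (x t) (k (x t + e t))) ≤ 0
  nlinarith
end
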